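/- arXiv:1404.1690 — 2 statements merged into one kernel-verified Lean document; each statement's English description precedes it below -/
import Mathlib

section
/- Let J ∈ ℕ and s > 0, and let φ¹ : ℝ → ℂ be a continuous function with supp φ¹ = [0, s] whose integer translates {φ¹(· − m) : m ∈ ℤ} form an orthonormal family in L²(ℝ). Let ψ¹ : ℝ → ℂ be continuous and compactly supported such that the family {x ↦ ψ¹(2^j x − l) : 0 ≤ j ≤ J, l ∈ ℤ} is orthogonal in L²(ℝ) and consists of nonzero functions, and such that each function x ↦ ψ¹(2^j x − l) (0 ≤ j ≤ J, l ∈ ℤ) lies in the L²-closed linear span of {x ↦ φ¹(2^{J+1} x − k) : k ∈ ℤ}. Let n ∈ ℕ, let t_1, …, t_n ∈ (0,1) satisfy t_i − t_j ∉ 2^{−(J+1)} ℤ for all i ≠ j, and for each 1 ≤ i ≤ n and 0 ≤ j ≤ J let L_j^i ⊂ ℤ be a finite set. Then the family of functions {x ↦ ψ¹(2^j (x − t_i) + l) : 1 ≤ i ≤ n, 0 ≤ j ≤ J, l ∈ L_j^i}, indexed by the triples (i, j, l), is linearly independent. -/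
open MeasureTheory

theorem aux_hilbert {H : Type*} [NormedAddCommGroup H] [InnerProductSpace ℂ H]
    (v : ℤ → H) (r : ℂ) (hr : r ≠ 0)
    (hv : ∀ k k', inner ℂ (v k) (v k') = if k = k' then r else 0)
    (h : H) (hh : h ∈ closure (Submodule.span ℂ (Set.range v) : Set H))
    (K : Finset ℤ) (hK : ∀ k, k ∉ K → inner ℂ (v k) h = 0) :
    h = ∑ k ∈ K, (r⁻¹ * inner ℂ (v k) h) • v k := by
  set p := ∑ k ∈ K, (r⁻¹ * inner ℂ (v k) h) • v k with hp
  have hpm : p ∈ Submodule.span ℂ (Set.range v) :=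
    Submodule.sum_mem _ fun k _ => Submodule.smul_mem _ _ (Submodule.subset_span ⟨k, rfl⟩)
  have horth : ∀ k, inner ℂ (v k) (h - p) = 0 := by
    intro k
    rw [inner_sub_right, hp, inner_sum]
    simp only [inner_smul_right, hv]
    by_cases hk : k ∈ K
    · rw [Finset.sum_eq_single k]
      · simp; field_simp; simp
      · intro b _ hb; simp [hb.symm]
      · intro h; exact absurd hk h
    · rw [hK k hk, Finset.sum_eq_zero, sub_zero]
      intro b hb
      have : k ≠ b := by rintro rfl; exact hk hb
      simp [this]
  have hcl : h - p ∈ (Submodule.span ℂ (Set.range v)).topologicalClosure :=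
    Submodule.sub_mem _ hh (Submodule.le_topologicalClosure _ hpm)
  have hor : h - p ∈ (Submodule.span ℂ (Set.range v))ᗮ := by
    rw [Submodule.mem_orthogonal]
    intro u hu
    induction hu using Submodule.span_induction with
    | mem x hx => obtain ⟨k, rfl⟩ := hx; exact horth k
    | zero => simp
    | add x y _ _ hx hy => rw [inner_add_left, hx, hy, add_zero]
    | smul a x _ hx => rw [inner_smul_left, hx, mul_zero]
  rw [← Submodule.orthogonal_closure] at hor
  have := (Submodule.mem_orthogonal _ _).1 hor _ hcl
  exact sub_eq_zero.1 (inner_self_eq_zero.1 this)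

theorem aux_trans (φ : ℝ → ℂ) (s : ℝ) (hs : 0 < s) (hφsupp : tsupport φ = Set.Icc 0 s)
    {ι : Type*} (S : Finset ι) (a : ι → ℝ) (ha : Function.Injective a) (d : ι → ℂ)
    (h : ∀ x, ∑ i ∈ S, d i * φ (x - a i) = 0) : ∀ i ∈ S, d i = 0 := by
  classical
  by_contra! hc
  obtain ⟨i0, hi0, hd0⟩ := hc
  set T := S.filter (fun i => d i ≠ 0) with hT
  have hTne : T.Nonempty := ⟨i0, by simp [hT, hi0, hd0]⟩
  obtain ⟨m, hmT, hmin⟩ := T.exists_min_image a hTne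
  have hzero : ∀ x, x < 0 → φ x = 0 := by
    intro x hx
    apply image_eq_zero_of_notMem_tsupport
    rw [hφsupp]; intro h; exact absurd h.1 (not_le.2 hx)
  obtain ⟨δ, hδ, hδm⟩ : ∃ δ : ℝ, 0 < δ ∧ ∀ i ∈ T, i ≠ m → δ ≤ a i - a m := by
    by_cases hE : (T.erase m).Nonempty
    · obtain ⟨q, hq, hqm⟩ := (T.erase m).exists_min_image a hE
      rw [Finset.mem_erase] at hq
      refine ⟨a q - a m, ?_, ?_⟩
      · have h1 := hmin q hq.2
        have h2 : a m ≠ a q := fun h => hq.1 (ha h).symm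
        have := lt_of_le_of_ne h1 h2
        linarith
      · intro i hi him
        have := hqm i (Finset.mem_erase.2 ⟨him, hi⟩)
        linarith
    · refine ⟨1, one_pos, fun i hi him => absurd ⟨i, Finset.mem_erase.2 ⟨him, hi⟩⟩ hE⟩
  have h0 : (0 : ℝ) ∈ closure (Function.support φ) := by
    change (0 : ℝ) ∈ tsupport φ
    rw [hφsupp]; exact ⟨le_rfl, hs.le⟩
  obtain ⟨y, hy, hyd⟩ := Metric.mem_closure_iff.1 h0 δ hδ
  rw [Real.dist_eq, abs_lt] at hyd
  have hx := h (y + a m)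
  rw [Finset.sum_eq_single m] at hx
  · have hdm : d m ≠ 0 := (Finset.mem_filter.1 hmT).2
    rw [add_sub_cancel_right] at hx
    exact (mul_ne_zero hdm hy) hx
  · intro b hb hbm
    by_cases hdb : d b = 0
    · simp [hdb]
    · have := hδm b (Finset.mem_filter.2 ⟨hb, hdb⟩) hbm
      rw [hzero _ (by linarith [hyd.1]), mul_zero]
  · intro h; exact absurd (Finset.mem_filter.1 hmT).1 h

theorem aux_orth {ι : Type*} (S : Finset ι) (f : ι → ℝ → ℂ)
    (hc : ∀ p ∈ S, Continuous (f p)) (hs : ∀ p ∈ S, HasCompactSupport (f p))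
    (hne : ∀ p ∈ S, f p ≠ 0)
    (ho : ∀ p ∈ S, ∀ q ∈ S, p ≠ q → ∫ x, (starRingEnd ℂ) (f p x) * f q x = 0)
    (c : ι → ℂ) (h : ∀ x, ∑ p ∈ S, c p * f p x = 0) : ∀ p ∈ S, c p = 0 := by
  intro p hp
  have hint : ∀ q ∈ S, Integrable (fun x => (starRingEnd ℂ) (f p x) * f q x) := by
    intro q hq
    apply Continuous.integrable_of_hasCompactSupport
    · exact (Complex.continuous_conj.comp (hc p hp)).mul (hc q hq)
    · exact (hs q hq).mul_left
  have h1 : ∫ x, ∑ q ∈ S, c q * ((starRingEnd ℂ) (f p x) * f q x) = 0 := by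
    rw [← integral_zero ℝ ℂ]
    congr 1
    ext x
    have : ∑ q ∈ S, c q * ((starRingEnd ℂ) (f p x) * f q x)
        = (starRingEnd ℂ) (f p x) * ∑ q ∈ S, c q * f q x := by
      rw [Finset.mul_sum]; exact Finset.sum_congr rfl fun _ _ => by ring
    rw [this, h, mul_zero]
  rw [integral_finset_sum _ (fun q hq => (hint q hq).const_mul _)] at h1
  simp only [integral_const_mul] at h1
  rw [Finset.sum_eq_single p] at h1
  · refine (mul_eq_zero.1 h1).resolve_right ?_
    intro h2
    apply hne p hp
    have e : ∀ x, (starRingEnd ℂ) (f p x) * f p x = ((‖f p x‖ ^ 2 : ℝ) : ℂ) := by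
      intro x; rw [Complex.conj_mul']; push_cast; rfl
    simp only [e] at h2
    rw [integral_complex_ofReal, Complex.ofReal_eq_zero] at h2
    have hcn : Continuous fun x => ‖f p x‖ ^ 2 := (hc p hp).norm.pow 2
    have hin : Integrable fun x => ‖f p x‖ ^ 2 := by
      have := (hint p hp).norm
      refine this.congr (Filter.Eventually.of_forall fun x => ?_)
      simp [pow_two]
    rw [integral_eq_zero_iff_of_nonneg (fun x => by positivity) hin] at h2
    have := (hcn.ae_eq_iff_eq volume continuous_const).1 h2
    ext x
    have : ‖f p x‖ ^ 2 = 0 := congrFun this x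
    simpa using this
  · intro q hq hqp
    rw [ho p hp q hq hqp.symm, mul_zero]
  · intro h; exact absurd hp h

theorem aux_span (φ : ℝ → ℂ) (hφc : Continuous φ) (hφs : HasCompactSupport φ)
    (N : ℝ) (hN : 0 < N)
    (hφON : ∀ m m' : ℤ,
      (∫ x : ℝ, (starRingEnd ℂ) (φ (x - m)) * φ (x - m')) = if m = m' then 1 else 0)
    (g : ℝ → ℂ) (hg : Continuous g) (hgs : HasCompactSupport g)
    (hspan : ∀ ε : ℝ, 0 < ε → ∃ (F : Finset ℤ) (c : ℤ → ℂ),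
        eLpNorm (fun x : ℝ => g x - ∑ k ∈ F, c k * φ (N * x - k)) 2 volume < ENNReal.ofReal ε) :
    g ∈ Submodule.span ℂ (Set.range fun (k : ℤ) (x : ℝ) => φ (N * x - k)) := by
  have hkc : ∀ k : ℤ, Continuous fun x : ℝ => φ (N * x - k) := fun k => by fun_prop
  have hks : ∀ k : ℤ, HasCompactSupport fun x : ℝ => φ (N * x - k) := by
    intro k
    exact hφs.comp_homeomorph ((Homeomorph.mulLeft₀ N hN.ne').trans (Homeomorph.subRight (k : ℝ)))
  have hkL : ∀ k : ℤ, MemLp (fun x : ℝ => φ (N * x - k)) 2 volume := fun k =>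
    (hkc k).memLp_of_hasCompactSupport (hks k)
  have hgL : MemLp g 2 volume := hg.memLp_of_hasCompactSupport hgs
  set v : ℤ → Lp ℂ 2 (volume : Measure ℝ) := fun k => (hkL k).toLp with hvdef
  have hinner : ∀ (a b : ℝ → ℂ) (ha : MemLp a 2 volume) (hb : MemLp b 2 volume),
      inner ℂ (ha.toLp) (hb.toLp) = ∫ x, (starRingEnd ℂ) (a x) * b x := by
    intro a b ha hb
    rw [L2.inner_def]
    apply integral_congr_ae
    filter_upwards [ha.coeFn_toLp, hb.coeFn_toLp] with x h1 h2
    rw [h1, h2, RCLike.inner_apply, mul_comm]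
  have hv : ∀ k k', inner ℂ (v k) (v k') = if k = k' then ((N⁻¹ : ℝ) : ℂ) else 0 := by
    intro k k'
    rw [hvdef]
    simp only
    rw [hinner]
    rw [Measure.integral_comp_mul_left (fun x : ℝ => (starRingEnd ℂ) (φ (x - k)) * φ (x - k')) N,
      hφON, abs_of_pos (inv_pos.2 hN)]
    split_ifs <;> simp
  have hcl : hgL.toLp ∈ closure (Submodule.span ℂ (Set.range v) : Set (Lp ℂ 2 (volume : Measure ℝ))) := by
    rw [Metric.mem_closure_iff]
    intro ε hε
    obtain ⟨F, c, hFc⟩ := hspan ε hε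
    refine ⟨∑ k ∈ F, c k • v k, Submodule.sum_mem _ fun k _ =>
      Submodule.smul_mem _ _ (Submodule.subset_span ⟨k, rfl⟩), ?_⟩
    have hsL : MemLp (fun x => ∑ k ∈ F, c k * φ (N * x - k)) 2 volume :=
      memLp_finset_sum _ fun k _ => (hkL k).const_mul (c k)
    have hse : ∑ k ∈ F, c k • v k = hsL.toLp := by
      apply Lp.ext
      have h2 : ∀ k ∈ F, ∀ᵐ x, (c k • v k : Lp ℂ 2 (volume : Measure ℝ)) x = c k * φ (N * x - k) := by
        intro k _
        filter_upwards [Lp.coeFn_smul (c k) (v k), (hkL k).coeFn_toLp] with x h1 h2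
        rw [h1, Pi.smul_apply, smul_eq_mul, ← h2]
      have h3 := (Filter.eventually_all_finset F).2 h2
      filter_upwards [Lp.coeFn_finsetSum F (fun k => c k • v k), hsL.coeFn_toLp, h3] with x h4 h5 h6
      rw [h4, h5]
      simp only [Finset.sum_apply]
      exact Finset.sum_congr rfl h6
    rw [hse, dist_edist, Lp.edist_toLp_toLp]
    exact (ENNReal.toReal_lt_of_lt_ofReal hFc)
  obtain ⟨K, hK⟩ : ∃ K : Finset ℤ, ∀ k, k ∉ K → inner ℂ (v k) (hgL.toLp) = 0 := by
    obtain ⟨A, hA⟩ := hφs.isCompact.isBounded.subset_closedBall 0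
    obtain ⟨B, hB⟩ := hgs.isCompact.isBounded.subset_closedBall 0
    refine ⟨Finset.Icc (-⌈N * B + A⌉) ⌈N * B + A⌉, fun k hk => ?_⟩
    rw [hvdef]
    simp only
    rw [hinner, ← integral_zero ℝ ℂ]
    congr 1
    ext x
    by_contra hne
    obtain ⟨h1, h2⟩ := mul_ne_zero_iff.1 hne
    have h1 : φ (N * x - k) ≠ 0 := by simpa using h1
    have h3 := hA (subset_tsupport _ h1)
    have h4 := hB (subset_tsupport _ h2)
    rw [mem_closedBall_zero_iff, Real.norm_eq_abs, abs_le] at h3 h4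
    have h5 : N * x ≤ N * B := mul_le_mul_of_nonneg_left h4.2 hN.le
    have h6 : N * (-B) ≤ N * x := mul_le_mul_of_nonneg_left h4.1 hN.le
    have h7 := Int.le_ceil (N * B + A)
    apply hk
    rw [Finset.mem_Icc]
    constructor
    · have : ((-⌈N * B + A⌉ : ℤ) : ℝ) ≤ k := by push_cast; linarith [h3.2]
      exact_mod_cast this
    · have : (k : ℝ) ≤ (⌈N * B + A⌉ : ℤ) := by linarith [h3.1]
      exact_mod_cast this
  have hr : ((N⁻¹ : ℝ) : ℂ) ≠ 0 := by
    rw [Complex.ofReal_ne_zero]; exact inv_ne_zero hN.ne'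
  have key := aux_hilbert v _ hr hv _ hcl K hK
  set w : ℤ → ℂ := fun k => (((N⁻¹ : ℝ) : ℂ))⁻¹ * inner ℂ (v k) (hgL.toLp) with hw
  have hgeq : g = fun x => ∑ k ∈ K, w k * φ (N * x - k) := by
    refine (Continuous.ae_eq_iff_eq volume hg (by fun_prop)).1 ?_
    have h2 : ∀ k ∈ K, ∀ᵐ x, (w k • v k : Lp ℂ 2 (volume : Measure ℝ)) x = w k * φ (N * x - k) := by
      intro k _
      filter_upwards [Lp.coeFn_smul (w k) (v k), (hkL k).coeFn_toLp] with x h1 h2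
      rw [h1, Pi.smul_apply, smul_eq_mul, ← h2]
    have h3 := (Filter.eventually_all_finset K).2 h2
    filter_upwards [Lp.coeFn_finsetSum K (fun k => w k • v k), hgL.coeFn_toLp, h3] with x h4 h5 h6
    rw [← h5, key, h4]
    simp only [Finset.sum_apply]
    exact Finset.sum_congr rfl h6
  have : g = ∑ k ∈ K, w k • (fun x : ℝ => φ (N * x - k)) := by
    rw [hgeq]; ext x; simp [Finset.sum_apply]
  rw [this]
  exact Submodule.sum_mem _ fun k _ => Submodule.smul_mem _ _ (Submodule.subset_span ⟨k, rfl⟩)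

/-- Oversampled wavelet systems: if the shifts `t_1, …, t_n ∈ (0,1)` satisfy
`t_i - t_j ∉ 2^(-(J+1)) ℤ` for `i ≠ j`, then the family
`{ψ¹(2^j(· - t_i) + l) : 1 ≤ i ≤ n, 0 ≤ j ≤ J, l ∈ L_j^i}` is linearly independent. -/
theorem stmt2 (J : ℕ) (s : ℝ) (hs : 0 < s)
    (φ ψ : ℝ → ℂ) (hφc : Continuous φ) (hφsupp : tsupport φ = Set.Icc 0 s)
    (hφON : ∀ m m' : ℤ,
      (∫ x : ℝ, (starRingEnd ℂ) (φ (x - m)) * φ (x - m')) = if m = m' then 1 else 0)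
    (hψc : Continuous ψ) (hψcs : HasCompactSupport ψ)
    (hψorth : ∀ j j' : ℕ, j ≤ J → j' ≤ J → ∀ l l' : ℤ, (j, l) ≠ (j', l') →
      (∫ x : ℝ, (starRingEnd ℂ) (ψ ((2 : ℝ) ^ j * x - l)) * ψ ((2 : ℝ) ^ j' * x - l')) = 0)
    (hψne : ∀ j : ℕ, j ≤ J → ∀ l : ℤ, (fun x : ℝ => ψ ((2 : ℝ) ^ j * x - l)) ≠ 0)
    (hψspan : ∀ j : ℕ, j ≤ J → ∀ l : ℤ, ∀ ε : ℝ, 0 < ε →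
      ∃ (F : Finset ℤ) (c : ℤ → ℂ),
        eLpNorm (fun x : ℝ =>
            ψ ((2 : ℝ) ^ j * x - l) - ∑ k ∈ F, c k * φ ((2 : ℝ) ^ (J + 1) * x - k)) 2 volume
          < ENNReal.ofReal ε)
    (n : ℕ) (t : Fin n → ℝ) (ht : ∀ i, t i ∈ Set.Ioo (0 : ℝ) 1)
    (htdiff : ∀ i i' : Fin n, i ≠ i' → ∀ z : ℤ, t i - t i' ≠ (z : ℝ) / 2 ^ (J + 1))
    (L : Fin n → ℕ → Finset ℤ) :
    ∀ c : Fin n → ℕ → ℤ → ℂ,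
      (fun x : ℝ => ∑ i, ∑ j ∈ Finset.range (J + 1), ∑ l ∈ L i j,
          c i j l * ψ ((2 : ℝ) ^ j * (x - t i) + l)) = 0 →
      ∀ i, ∀ j ∈ Finset.range (J + 1), ∀ l ∈ L i j, c i j l = 0 := by
  classical
  intro c hsum i
  have hφs : HasCompactSupport φ := by
    rw [HasCompactSupport, hφsupp]; exact isCompact_Icc
  have hN : (0 : ℝ) < 2 ^ (J + 1) := by positivity
  have hfc : ∀ (j : ℕ) (l : ℤ), Continuous fun x : ℝ => ψ ((2 : ℝ) ^ j * x - l) :=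
    fun j l => by fun_prop
  have hfs : ∀ (j : ℕ) (l : ℤ), HasCompactSupport fun x : ℝ => ψ ((2 : ℝ) ^ j * x - l) := by
    intro j l
    exact hψcs.comp_homeomorph ((Homeomorph.mulLeft₀ ((2 : ℝ) ^ j) (by positivity)).trans
      (Homeomorph.subRight (l : ℝ)))
  set g : Fin n → ℝ → ℂ := fun i => ∑ j ∈ Finset.range (J + 1), ∑ l ∈ L i j,
    c i j l • (fun x : ℝ => ψ ((2 : ℝ) ^ j * x - ((-l : ℤ) : ℝ))) with hg
  have hgx : ∀ i x, g i x = ∑ j ∈ Finset.range (J + 1), ∑ l ∈ L i j,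
      c i j l * ψ ((2 : ℝ) ^ j * x + l) := by
    intro i x
    simp [hg, Finset.sum_apply]
  have hgspan : ∀ i, g i ∈ Submodule.span ℂ
      (Set.range fun (k : ℤ) (x : ℝ) => φ ((2 : ℝ) ^ (J + 1) * x - k)) := by
    intro i
    refine Submodule.sum_mem _ fun j hj => Submodule.sum_mem _ fun l _ =>
      Submodule.smul_mem _ _ ?_
    have hj' : j ≤ J := Nat.lt_succ_iff.1 (Finset.mem_range.1 hj)
    exact aux_span φ hφc hφs _ hN hφON _ (hfc j (-l)) (hfs j (-l)) (hψspan j hj' (-l))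
  have hex : ∀ i, ∃ d : ℤ →₀ ℂ, ∀ x, g i x = ∑ k ∈ d.support, d k * φ ((2 : ℝ) ^ (J + 1) * x - k) := by
    intro i
    obtain ⟨d, hd⟩ := (Finsupp.mem_span_range_iff_exists_finsupp).1 (hgspan i)
    refine ⟨d, fun x => ?_⟩
    rw [← hd]
    simp [Finsupp.sum, Finset.sum_apply]
  choose d hd using hex
  have hd0 := aux_trans φ s hs hφsupp
    ((Finset.univ : Finset (Fin n)).sigma fun i => (d i).support)
    (fun p : (_ : Fin n) × ℤ => (2 : ℝ) ^ (J + 1) * t p.1 + p.2) (by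
      rintro ⟨a, k⟩ ⟨b, m⟩ hab
      simp only at hab
      have : a = b := by
        by_contra hne
        apply htdiff a b hne (m - k)
        rw [eq_div_iff hN.ne']
        push_cast
        linarith
      subst this
      have : k = m := by
        have : (k : ℝ) = m := by linarith
        exact_mod_cast this
      rw [this]) (fun p => d p.1 p.2) (by
      intro x
      rw [Finset.sum_sigma]
      have := congrFun hsum (x / 2 ^ (J + 1))
      simp only [← hgx, hd] at this
      rw [Pi.zero_apply] at this
      rw [← this]
      refine Finset.sum_congr rfl fun a _ => Finset.sum_congr rfl fun k _ => ?_
      congr 2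
      field_simp
      ring)
  have hgi : ∀ x, g i x = 0 := by
    intro x
    rw [hd]
    refine Finset.sum_eq_zero fun k hk => ?_
    have := hd0 ⟨i, k⟩ (by rw [Finset.mem_sigma]; exact ⟨Finset.mem_univ _, hk⟩)
    simp only at this
    rw [this, zero_mul]
  have hfin := aux_orth ((Finset.range (J + 1)).sigma fun j => L i j)
    (fun (p : (_ : ℕ) × ℤ) (x : ℝ) => ψ ((2 : ℝ) ^ p.1 * x - ((-p.2 : ℤ) : ℝ)))
    (fun p _ => hfc _ _) (fun p _ => hfs _ _)
    (fun p hp => hψne p.1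
      (Nat.lt_succ_iff.1 (Finset.mem_range.1 (Finset.mem_sigma.1 hp).1)) _)
    (by
      rintro ⟨j, l⟩ hp ⟨j', l'⟩ hq hpq
      refine hψorth j j' (Nat.lt_succ_iff.1 (Finset.mem_range.1 (Finset.mem_sigma.1 hp).1))
        (Nat.lt_succ_iff.1 (Finset.mem_range.1 (Finset.mem_sigma.1 hq).1)) _ _ ?_
      intro h
      apply hpq
      rw [Prod.mk.injEq, neg_inj] at h
      obtain ⟨rfl, rfl⟩ := h
      rfl)
    (fun p => c i p.1 p.2) (by
      intro x
      rw [Finset.sum_sigma, ← hgi x, hgx]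
      refine Finset.sum_congr rfl fun a _ => Finset.sum_congr rfl fun k _ => ?_
      simp)
  intro j hj l hl
  exact hfin ⟨j, l⟩ (Finset.mem_sigma.2 ⟨hj, hl⟩)
end

section
/- Assume the admissibility hypotheses on φ¹, ψ¹, c₁, c₂. Then the 'unsheared' family Γ₃, consisting of the functions (x₁, x₂) ↦ φ¹(x₁ − c₁ m₁) φ¹(x₂ − c₁ m₂) for m ∈ ℤ², the functions ψ_{j,0,m}(x₁, x₂) = 2^{3j/4} ψ¹(2^j x₁ − c₁ m₁) φ¹(2^{⌊j/2⌋} x₂ − c₂ m₂) for j ∈ ℕ and m ∈ ℤ², and the functions ψ̃_{j,0,m}(x₁, x₂) = 2^{3j/4} φ¹(2^{⌊j/2⌋} x₁ − c₂ m₁) ψ¹(2^j x₂ − c₁ m₂) for j ∈ ℕ and m ∈ ℤ², is linearly independent as a family in L²(ℝ²) indexed by these parameters. -/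
open MeasureTheory

namespace Gam

/-- Group algebra of translations. -/
abbrev A := AddMonoidAlgebra ℂ ℝ

/-- Translation operator. -/
noncomputable def tr : Multiplicative ℝ →* Module.End ℂ (ℝ → ℂ) where
  toFun t :=
    { toFun := fun f x => f (x - t.toAdd)
      map_add' := fun f g => rfl
      map_smul' := fun c f => rfl }
  map_one' := by ext f x; simp
  map_mul' := by
    intro s t; ext f x
    simp only [LinearMap.coe_mk, AddHom.coe_mk, Module.End.mul_apply, toAdd_mul]
    congr 1; ring

/-- Action of the group algebra on functions. -/
noncomputable def act : A →ₐ[ℂ] Module.End ℂ (ℝ → ℂ) := AddMonoidAlgebra.lift ℂ _ ℝ tr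

lemma act_apply (p : A) (f : ℝ → ℂ) (x : ℝ) :
    act p f x = ∑ t ∈ p.coeff.support, p.coeff t * f (x - t) := by
  simp [act, AddMonoidAlgebra.lift_apply, Finsupp.sum, tr]

lemma act_single (t : ℝ) (c : ℂ) (f : ℝ → ℂ) :
    act (AddMonoidAlgebra.single t c) f = fun x => c * f (x - t) := by
  funext x
  simp [act, AddMonoidAlgebra.lift_single, tr]

lemma act_mul (p q : A) (f : ℝ → ℂ) : act (p * q) f = act p (act q f) := by
  rw [map_mul]; rfl

/-- Elements supported in a subgroup. -/
noncomputable def Sup (H : AddSubgroup ℝ) : Subalgebra ℂ A where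
  carrier := {p | ∀ t, p.coeff t ≠ 0 → t ∈ H}
  mul_mem' := by
    classical
    intro p q hp hq t ht
    have := AddMonoidAlgebra.support_coeff_mul_subset p q (Finsupp.mem_support_iff.2 ht)
    obtain ⟨a, ha, b, hb, rfl⟩ := Finset.mem_add.1 this
    exact H.add_mem (hp _ (Finsupp.mem_support_iff.1 ha)) (hq _ (Finsupp.mem_support_iff.1 hb))
  add_mem' := by
    intro p q hp hq t ht
    by_cases h : p.coeff t = 0
    · apply hq; intro h'; apply ht; simp [h, h']
    · exact hp t h
  algebraMap_mem' := by
    intro r t ht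
    have : t = 0 := by
      by_contra h
      apply ht
      simp [AddMonoidAlgebra.coe_algebraMap, Finsupp.single_apply, Ne.symm h]
    rw [this]; exact H.zero_mem

lemma mem_Sup {H : AddSubgroup ℝ} {p : A} : p ∈ Sup H ↔ ∀ t, p.coeff t ≠ 0 → t ∈ H := Iff.rfl

lemma single_mem_Sup {H : AddSubgroup ℝ} {t : ℝ} (ht : t ∈ H) (c : ℂ) :
    AddMonoidAlgebra.single t c ∈ Sup H := by
  intro u hu
  have : u = t := by
    by_contra h
    apply hu
    simp [Finsupp.single_apply, Ne.symm h]
  rwa [this]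

lemma Sup_mono {H K : AddSubgroup ℝ} (h : H ≤ K) : Sup H ≤ Sup K :=
  fun _ hp t ht => h (hp t ht)

open Classical in
/-- Coset part. -/
noncomputable def part (H : AddSubgroup ℝ) (r : ℝ) (d : A) : A :=
  AddMonoidAlgebra.ofCoeff (d.coeff.filter (fun t => t - r ∈ H))

lemma part_coeff_in {H : AddSubgroup ℝ} {r t : ℝ} (d : A) (h : t - r ∈ H) :
    (part H r d).coeff t = d.coeff t := by
  simp [part, Finsupp.filter_apply, h]

lemma part_coeff_out {H : AddSubgroup ℝ} {r t : ℝ} (d : A) (h : t - r ∉ H) :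
    (part H r d).coeff t = 0 := by
  simp [part, Finsupp.filter_apply, h]

lemma part_mul {H : AddSubgroup ℝ} (r : ℝ) {p : A} (hp : p ∈ Sup H) (d : A) :
    part H r (p * d) = p * part H r d := by
  classical
  apply AddMonoidAlgebra.ext
  ext t
  by_cases h : t - r ∈ H
  · rw [part_coeff_in _ h]
    have e : p * d = p * part H r d + p * (d - part H r d) := by ring
    rw [e, AddMonoidAlgebra.coeff_add, Finsupp.add_apply]
    suffices (p * (d - part H r d)).coeff t = 0 by rw [this, add_zero]
    by_contra ht
    have := AddMonoidAlgebra.support_coeff_mul_subset _ _ (Finsupp.mem_support_iff.2 ht)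
    obtain ⟨a, ha, b, hb, rfl⟩ := Finset.mem_add.1 this
    have ha' := hp _ (Finsupp.mem_support_iff.1 ha)
    apply Finsupp.mem_support_iff.1 hb
    have : b - r ∈ H := by
      have := H.sub_mem h ha'
      convert this using 1; ring
    simp [part_coeff_in _ this]
  · rw [part_coeff_out _ h]
    by_contra ht
    have := AddMonoidAlgebra.support_coeff_mul_subset _ _ (Finsupp.mem_support_iff.2 (Ne.symm ht))
    obtain ⟨a, ha, b, hb, rfl⟩ := Finset.mem_add.1 this
    have ha' := hp _ (Finsupp.mem_support_iff.1 ha)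
    apply Finsupp.mem_support_iff.1 hb
    apply part_coeff_out
    intro h2
    apply h
    have := H.add_mem ha' h2
    convert this using 1; ring

/-- Torsion freeness. -/
lemma act_ne_zero {p : A} (hp : p ≠ 0) {f : ℝ → ℂ} (hf : f ≠ 0)
    (hb : BddBelow (Function.support f)) : act p f ≠ 0 := by
  classical
  intro h0
  have hne : (Function.support f).Nonempty := Function.support_nonempty_iff.2 hf
  have hs : p.coeff.support.Nonempty := by
    rw [Finsupp.support_nonempty_iff]
    simpa using hp
  set u := sInf (Function.support f)
  set t0 := p.coeff.support.min' hs with ht0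
  have ht0m : t0 ∈ p.coeff.support := Finset.min'_mem _ _
  obtain ⟨δ, hδ, hgap⟩ : ∃ δ > 0, ∀ t ∈ p.coeff.support, t ≠ t0 → t0 + δ ≤ t := by
    by_cases hE : (p.coeff.support.erase t0).Nonempty
    · refine ⟨(p.coeff.support.erase t0).min' hE - t0, ?_, ?_⟩
      · have h1 := Finset.min'_mem _ hE
        have h2 := Finset.mem_erase.1 h1
        have h3 := Finset.min'_le _ _ h2.2
        have : t0 < _ := lt_of_le_of_ne h3 (Ne.symm h2.1)
        linarith
      · intro t ht hne'
        have := Finset.min'_le _ _ (Finset.mem_erase.2 ⟨hne', ht⟩)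
        linarith
    · refine ⟨1, one_pos, ?_⟩
      intro t ht hne'
      exact absurd ⟨t, Finset.mem_erase.2 ⟨hne', ht⟩⟩ hE
  obtain ⟨y, hy, hyu⟩ := exists_lt_of_csInf_lt hne (show sInf (Function.support f) < u + δ by
    show u < u + δ; linarith)
  have := congrFun h0 (y + t0)
  rw [act_apply, Finset.sum_eq_single t0] at this
  · simp only [add_sub_cancel_right, Pi.zero_apply, mul_eq_zero] at this
    rcases this with h | h
    · exact Finsupp.mem_support_iff.1 ht0m h
    · exact hy h
  · intro t ht htne
    have h1 := hgap t ht htne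
    have : f (y + t0 - t) = 0 := by
      by_contra hf0
      have : u ≤ y + t0 - t := csInf_le hb hf0
      linarith
    rw [this, mul_zero]
  · intro h; exact absurd ht0m h

lemma act_inj {p q : A} {f : ℝ → ℂ} (hf : f ≠ 0)
    (hb : BddBelow (Function.support f)) (h : act p f = act q f) : p = q := by
  by_contra hne
  apply act_ne_zero (sub_ne_zero.2 hne) hf hb
  rw [map_sub, LinearMap.sub_apply, h, sub_self]

/-- Continuous with compact support. -/
def CC (f : ℝ → ℂ) : Prop := Continuous f ∧ HasCompactSupport f

lemma CC.comp_affine {f : ℝ → ℂ} (hf : CC f) {a : ℝ} (ha : a ≠ 0) (t : ℝ) :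
    CC (fun x => f (a * x - t)) := by
  refine ⟨hf.1.comp (by fun_prop), ?_⟩
  have := hf.2.comp_homeomorph ((Homeomorph.mulLeft₀ a ha).trans (Homeomorph.subRight t))
  exact this

lemma CC.shift {f : ℝ → ℂ} (hf : CC f) (t : ℝ) : CC (fun x => f (x - t)) := by
  simpa using hf.comp_affine one_ne_zero t

lemma CC.const_mul {f : ℝ → ℂ} (hf : CC f) (c : ℂ) : CC (fun x => c * f x) :=
  ⟨continuous_const.mul hf.1, hf.2.mul_left⟩

lemma CC.add {f g : ℝ → ℂ} (hf : CC f) (hg : CC g) : CC (fun x => f x + g x) :=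
  ⟨hf.1.add hg.1, hf.2.add hg.2⟩

lemma CC.sub {f g : ℝ → ℂ} (hf : CC f) (hg : CC g) : CC (fun x => f x - g x) := by
  have := hf.add (hg.const_mul (-1))
  convert this using 2
  ring

lemma CC.zero : CC (fun _ => 0) := ⟨continuous_const, HasCompactSupport.zero⟩

lemma CC.sum {ι : Type*} (F : Finset ι) {f : ι → ℝ → ℂ} (hf : ∀ i, CC (f i)) :
    CC (fun x => ∑ i ∈ F, f i x) := by
  classical
  induction F using Finset.induction_on with
  | empty => simpa using CC.zero
  | insert a s ha ih => simpa [Finset.sum_insert ha] using (hf a).add ih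

lemma CC.act {f : ℝ → ℂ} (hf : CC f) (p : A) : CC (act p f) := by
  have : Gam.act p f = fun x => ∑ t ∈ p.coeff.support, p.coeff t * f (x - t) :=
    funext fun x => act_apply p f x
  rw [this]
  exact CC.sum _ fun t => (hf.shift t).const_mul _

lemma CC.integrable_mul {f g : ℝ → ℂ} (hf : CC f) (hg : CC g) :
    Integrable (fun x => (starRingEnd ℂ) (f x) * g x) := by
  apply Continuous.integrable_of_hasCompactSupport
  · exact (Complex.continuous_conj.comp hf.1).mul hg.1
  · exact hg.2.mul_left

lemma CC.bdd {f : ℝ → ℂ} (hf : CC f) : BddBelow (Function.support f) :=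
  (hf.2.isCompact.bddBelow).mono (subset_tsupport f)

lemma CC.eq_zero {u : ℝ → ℂ} (hu : CC u) (h : ∫ x, (starRingEnd ℂ) (u x) * u x = 0) :
    u = 0 := by
  by_contra hne
  obtain ⟨x0, hx0⟩ := Function.ne_iff.1 hne
  have hcont : Continuous fun x => ‖u x‖ ^ 2 := by have := hu.1; fun_prop
  have h1 : 0 < ∫ x, ‖u x‖ ^ 2 := by
    refine hcont.integral_pos_of_hasCompactSupport_nonneg_nonzero (x := x0) ?_ ?_ ?_
    · have := hu.2.norm
      exact this.comp_left (g := fun y : ℝ => y ^ 2) (by simp)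
    · intro x; positivity
    · simpa using hx0
  have h2 : ∫ x, (starRingEnd ℂ) (u x) * u x = ((∫ x, ‖u x‖ ^ 2 : ℝ) : ℂ) := by
    rw [← integral_complex_ofReal]
    congr 1; funext x
    rw [Complex.conj_mul']; simp
  rw [h2] at h
  have : (∫ x, ‖u x‖ ^ 2 : ℝ) = 0 := by exact_mod_cast h
  linarith

lemma integral_conj_sum {ι κ : Type*} (F : Finset ι) (G : Finset κ) (a : ι → ℂ) (b : κ → ℂ)
    (f : ι → ℝ → ℂ) (g : κ → ℝ → ℂ) (hf : ∀ i, CC (f i)) (hg : ∀ i, CC (g i)) :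
    ∫ x, (starRingEnd ℂ) (∑ i ∈ F, a i * f i x) * (∑ k ∈ G, b k * g k x) =
      ∑ i ∈ F, ∑ k ∈ G, (starRingEnd ℂ) (a i) * b k *
        ∫ x, (starRingEnd ℂ) (f i x) * g k x := by
  have : ∀ x, (starRingEnd ℂ) (∑ i ∈ F, a i * f i x) * (∑ k ∈ G, b k * g k x) =
      ∑ i ∈ F, ∑ k ∈ G, (starRingEnd ℂ) (a i) * b k * ((starRingEnd ℂ) (f i x) * g k x) := by
    intro x
    rw [map_sum, Finset.sum_mul_sum]
    refine Finset.sum_congr rfl fun i _ => Finset.sum_congr rfl fun k _ => ?_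
    rw [map_mul]; ring
  simp_rw [this]
  rw [integral_finsetSum]
  · refine Finset.sum_congr rfl fun i _ => ?_
    rw [integral_finsetSum]
    · refine Finset.sum_congr rfl fun k _ => ?_
      rw [integral_const_mul]
    · intro k _
      exact ((hf i).integrable_mul (hg k)).const_mul _
  · intro i _
    apply integrable_finsetSum
    intro k _
    exact ((hf i).integrable_mul (hg k)).const_mul _

/-- Dilation. -/
noncomputable def dil (f : ℝ → ℂ) (k : ℤ) : ℝ → ℂ := fun x => f ((2 : ℝ) ^ k * x)

lemma CC.dil {f : ℝ → ℂ} (hf : CC f) (k : ℤ) : CC (dil f k) := by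
  have := hf.comp_affine (a := (2 : ℝ) ^ k) (by positivity) 0
  simp only [sub_zero] at this
  exact this

lemma dil_ne {f : ℝ → ℂ} (hf : f ≠ 0) (k : ℤ) : dil f k ≠ 0 := by
  obtain ⟨x, hx⟩ := Function.ne_iff.1 hf
  intro h
  apply hx
  have := congrFun h ((2 : ℝ) ^ (-k) * x)
  have e : (2 : ℝ) ^ k * (2 : ℝ) ^ (-k) = 1 := by rw [← zpow_add₀ (by norm_num)]; simp
  simp only [dil] at this
  rwa [← mul_assoc, e, one_mul] at this

/-- The lattice of translations at scale `k` with denominator `b`. -/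
noncomputable def Hb (b : ℕ) (k : ℤ) : AddSubgroup ℝ :=
  AddSubgroup.zmultiples ((2 : ℝ) ^ (-k) / b)

lemma mem_Hb {b : ℕ} {k : ℤ} {t : ℝ} : t ∈ Hb b k ↔ ∃ n : ℤ, t = n * ((2 : ℝ) ^ (-k) / b) := by
  rw [Hb, AddSubgroup.mem_zmultiples_iff]
  simp [eq_comm]

lemma Hb_mono_k {b : ℕ} {k l : ℤ} (h : k ≤ l) : Hb b k ≤ Hb b l := by
  intro t ht
  obtain ⟨n, rfl⟩ := mem_Hb.1 ht
  obtain ⟨m, rfl⟩ := Int.le.dest h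
  refine mem_Hb.2 ⟨n * 2 ^ m, ?_⟩
  push_cast
  rw [neg_add, zpow_add₀ (by norm_num)]
  simp
  field_simp

lemma Hb_one_le {b : ℕ} (hb : 0 < b) (k : ℤ) : Hb 1 k ≤ Hb b k := by
  intro t ht
  obtain ⟨n, rfl⟩ := mem_Hb.1 ht
  refine mem_Hb.2 ⟨n * b, ?_⟩
  have : (b : ℝ) ≠ 0 := by positivity
  push_cast
  field_simp

lemma Hb_inter {b : ℕ} (hb : Odd b) {k : ℤ} {t : ℝ} (h1 : t ∈ Hb b k) (h2 : t ∈ Hb 1 (k + 1)) :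
    t ∈ Hb 1 k := by
  obtain ⟨n, hn⟩ := mem_Hb.1 h1
  obtain ⟨m, hm⟩ := mem_Hb.1 h2
  have hb0 : (b : ℝ) ≠ 0 := by exact_mod_cast hb.pos.ne'
  have e : (2 : ℝ) ^ (-k) = 2 * (2 : ℝ) ^ (-(k + 1)) := by
    rw [neg_add, zpow_add₀ (by norm_num)]; norm_num; ring
  have hp : (0 : ℝ) < (2 : ℝ) ^ (-(k + 1)) := by positivity
  have h3 : (m : ℝ) * b = 2 * n := by
    rw [hn, e] at hm
    field_simp at hm
    push_cast at hm
    linarith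
  have h4 : m * b = 2 * n := by exact_mod_cast h3
  have h5 : Even m := by
    have h6 : Even (m * (b : ℤ)) := ⟨n, by rw [h4]; ring⟩
    rcases Int.even_mul.1 h6 with h | h
    · exact h
    · have hb' : Odd (b : ℤ) := by exact_mod_cast hb
      exact absurd h (Int.not_even_iff_odd.2 hb')
  obtain ⟨r, rfl⟩ := h5
  refine mem_Hb.2 ⟨r, ?_⟩
  rw [hm, e]; push_cast; ring

/-- Finite two-scale type relations. -/
def TS (φ ψ : ℝ → ℂ) : Prop := ∀ n : ℕ, ∃ (F : Finset ℤ) (a : ℤ → ℂ),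
  ∀ x, ψ x = ∑ k ∈ F, a k * φ ((2 : ℝ) ^ (n + 1) * x - k)

lemma TS.act {φ ψ : ℝ → ℂ} (h : TS φ ψ) {k l : ℤ} (hkl : k < l) :
    ∃ d ∈ Sup (Hb 1 l), dil ψ k = act d (dil φ l) := by
  obtain ⟨n, hn⟩ := Int.le.dest (Int.add_one_le_of_lt hkl)
  obtain ⟨F, a, hF⟩ := h n
  refine ⟨∑ j ∈ F, AddMonoidAlgebra.single ((j : ℝ) * ((2 : ℝ) ^ (-l))) (a j), ?_, ?_⟩
  · refine Subalgebra.sum_mem _ fun j _ => single_mem_Sup ?_ _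
    exact mem_Hb.2 ⟨j, by simp⟩
  · funext x
    rw [map_sum, LinearMap.sum_apply, Finset.sum_apply]
    simp only [act_single]
    simp only [dil]
    rw [hF]
    refine Finset.sum_congr rfl fun j _ => ?_
    congr 2
    have e : (2 : ℝ) ^ l * (2 : ℝ) ^ (-l) = 1 := by rw [← zpow_add₀ (by norm_num)]; simp
    have e2 : (2 : ℝ) ^ l = (2 : ℝ) ^ (n + 1) * (2 : ℝ) ^ k := by
      rw [← hn, ← zpow_natCast, ← zpow_add₀ (by norm_num)]; congr 1; push_cast; ring
    rw [mul_sub, ← mul_assoc, ← e2]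
    linear_combination (j : ℝ) * e

/-- Orthogonality of adjacent scales. -/
lemma orth_dil {ψ : ℝ → ℂ}
    (h : ∀ l : ℤ, (∫ x : ℝ, (starRingEnd ℂ) (ψ (2 * x - l)) * ψ x) = 0)
    (k : ℤ) {t t' : ℝ} (ht : t - t' ∈ Hb 1 (k + 1)) :
    ∫ x : ℝ, (starRingEnd ℂ) (dil ψ (k + 1) (x - t)) * dil ψ k (x - t') = 0 := by
  obtain ⟨l, hl⟩ := mem_Hb.1 ht
  set g : ℝ → ℂ := fun y => (starRingEnd ℂ) (ψ (2 * y - l)) * ψ y with hg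
  have : ∀ x, (starRingEnd ℂ) (dil ψ (k + 1) (x - t)) * dil ψ k (x - t') =
      g ((2 : ℝ) ^ k * (x - t')) := by
    intro x
    simp only [hg, dil]
    congr 3
    have e : (2 : ℝ) ^ (k + 1) * (2 : ℝ) ^ (-(k + 1)) = 1 := by
      rw [← zpow_add₀ (by norm_num)]; simp
    have e2 : (2 : ℝ) ^ (k + 1) = 2 * (2 : ℝ) ^ k := by
      rw [zpow_add₀ (by norm_num)]; norm_num; ring
    have ht' : t = t' + l * (2 : ℝ) ^ (-(k + 1)) := by
      simp at hl; simp; linarith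
    rw [ht']
    linear_combination (x - t') * e2 - l * e
  simp_rw [this]
  rw [integral_sub_right_eq_self (fun x => g ((2 : ℝ) ^ k * x)) t',
    Measure.integral_comp_mul_left, h l, smul_zero]

/-- The key lemma, first form. -/
lemma key0 {φ ψ : ℝ → ℂ} (hφ : CC φ) (hψ : CC ψ) (hφ0 : φ ≠ 0) (hψ0 : ψ ≠ 0)
    (hTS : TS φ ψ) (h : ∀ l : ℤ, (∫ x : ℝ, (starRingEnd ℂ) (ψ (2 * x - l)) * ψ x) = 0)
    {b : ℕ} (hb : Odd b) (k : ℤ) {p q : A} (hp : p ∈ Sup (Hb b (k + 1)))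
    (hq : q ∈ Sup (Hb b (k + 1))) (hpq : act p (dil ψ (k + 1)) = act q (dil ψ k)) : p = 0 := by
  classical
  by_contra hp0
  obtain ⟨d, hd, hd'⟩ := hTS.act (show k + 1 < k + 1 + 1 by omega)
  obtain ⟨g, hg, hg'⟩ := hTS.act (show k < k + 1 + 1 by omega)
  have hg0 : g ≠ 0 := by
    rintro rfl
    apply dil_ne hψ0 k
    rw [hg']; simp
  have e1 : p * d = q * g := by
    apply act_inj (dil_ne hφ0 (k + 1 + 1)) (hφ.dil _).bdd
    rw [act_mul, act_mul, ← hd', ← hg', hpq]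
  obtain ⟨r, hr⟩ : ∃ r, g.coeff r ≠ 0 := by
    by_contra hcon
    push Not at hcon
    apply hg0
    apply AddMonoidAlgebra.ext
    ext t; simp [hcon]
  set H := Hb b (k + 1)
  have e2 : p * part H r d = q * part H r g := by
    rw [← part_mul r hp, ← part_mul r hq, e1]
  have e3 : part H r d * g = part H r g * d := by
    apply mul_left_cancel₀ hp0
    linear_combination g * e2 - part H r g * e1
  have e4 : act (part H r g) (dil ψ (k + 1)) = act (part H r d) (dil ψ k) := by
    rw [hd', hg', ← act_mul, ← act_mul, e3]
  have hsup : ∀ {f : A}, f ∈ Sup (Hb 1 (k + 1 + 1)) → ∀ t ∈ (part H r f).coeff.support,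
      t - r ∈ Hb 1 (k + 1) := by
    intro f hf t ht
    have ht := Finsupp.mem_support_iff.1 ht
    have h1 : t - r ∈ H := by
      by_contra h; exact ht (part_coeff_out _ h)
    rw [part_coeff_in _ h1] at ht
    exact Hb_inter hb h1 (AddSubgroup.sub_mem _ (hf t ht) (hg r hr))
  have hzero : act (part H r g) (dil ψ (k + 1)) = 0 := by
    apply ((hψ.dil _).act _).eq_zero
    have e5 : ∀ x, (starRingEnd ℂ) (act (part H r g) (dil ψ (k + 1)) x) *
        act (part H r g) (dil ψ (k + 1)) x =
        (starRingEnd ℂ) (∑ t ∈ (part H r g).coeff.support,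
          (part H r g).coeff t * dil ψ (k + 1) (x - t)) *
        (∑ t ∈ (part H r d).coeff.support, (part H r d).coeff t * dil ψ k (x - t)) := by
      intro x
      rw [← act_apply, ← act_apply, e4]
    simp_rw [e5]
    rw [integral_conj_sum _ _ (part H r g).coeff (part H r d).coeff
      (fun t x => dil ψ (k + 1) (x - t)) (fun t x => dil ψ k (x - t))
      (fun t => (hψ.dil _).shift t) (fun t => (hψ.dil _).shift t)]
    refine Finset.sum_eq_zero fun t ht => Finset.sum_eq_zero fun t' ht' => ?_
    rw [orth_dil h k, mul_zero]
    have := AddSubgroup.sub_mem _ (hsup hg t ht) (hsup hd t' ht')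
    simpa using this
  have hpg : part H r g ≠ 0 := by
    intro h0
    apply hr
    rw [← part_coeff_in (H := H) (r := r) g (by simp [H.zero_mem]), h0]
    simp
  exact act_ne_zero hpg (dil_ne hψ0 _) (hψ.dil _).bdd hzero

/-- The key lemma. -/
lemma key {φ ψ : ℝ → ℂ} (hφ : CC φ) (hψ : CC ψ) (hφ0 : φ ≠ 0) (hψ0 : ψ ≠ 0)
    (hTS : TS φ ψ) (h : ∀ l : ℤ, (∫ x : ℝ, (starRingEnd ℂ) (ψ (2 * x - l)) * ψ x) = 0)
    {b : ℕ} (hb : Odd b) {k l : ℤ} (hkl : k ≤ l) {P R Q : A} (hP : P ∈ Sup (Hb b l))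
    (hR : R ∈ Sup (Hb b l)) (hQ : Q ∈ Sup (Hb b k))
    (heq : act P (dil ψ l) + act R (dil φ l) = act Q (dil φ k)) : P = 0 := by
  have hne : ∀ {i j : ℤ} {e : A}, dil ψ i = act e (dil φ j) → e ≠ 0 := by
    rintro i j e he rfl
    apply dil_ne hψ0 i
    rw [he]; simp
  obtain ⟨e, he, he'⟩ := hTS.act (show k - 1 < k by omega)
  obtain ⟨f, hf, hf'⟩ := hTS.act (show k - 1 < l by omega)
  obtain ⟨u, hu, hu'⟩ := hTS.act (show l - 1 < l by omega)
  have hle := Hb_one_le hb.pos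
  have he2 : e ∈ Sup (Hb b l) := Sup_mono ((hle k).trans (Hb_mono_k hkl)) he
  have hf2 : f ∈ Sup (Hb b l) := Sup_mono (hle l) hf
  have hu2 : u ∈ Sup (Hb b l) := Sup_mono (hle l) hu
  have hQ2 : Q ∈ Sup (Hb b l) := Sup_mono (Hb_mono_k hkl) hQ
  have h1 : act (e * P) (dil ψ l) = act (Q * f - e * R) (dil φ l) := by
    have h2 : act e (act Q (dil φ k)) = act Q (act f (dil φ l)) := by
      rw [← act_mul, mul_comm, act_mul, ← he', hf']
    rw [act_mul, map_sub, LinearMap.sub_apply, act_mul, act_mul, ← h2, ← heq, map_add]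
    simp
  have h2 : act (u * (e * P)) (dil ψ l) = act (Q * f - e * R) (dil ψ (l - 1)) := by
    rw [act_mul, h1, hu', ← act_mul, ← act_mul, mul_comm]
  have h3 : u * (e * P) = 0 := by
    have e1 : l = l - 1 + 1 := by ring
    refine key0 hφ hψ hφ0 hψ0 hTS h hb (l - 1) (q := Q * f - e * R) ?_ ?_ ?_
    · rw [← e1]; exact mul_mem hu2 (mul_mem he2 hP)
    · rw [← e1]; exact sub_mem (mul_mem hQ2 hf2) (mul_mem he2 hR)
    · rw [← e1]; exact h2
  rcases mul_eq_zero.1 h3 with h | h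
  · exact absurd h (hne hu')
  rcases mul_eq_zero.1 h with h | h
  · exact absurd h (hne he')
  · exact h

/-- Inner product. -/
noncomputable def ip (f g : ℝ → ℂ) : ℂ := ∫ x, (starRingEnd ℂ) (f x) * g x

lemma ip_sub {f g h : ℝ → ℂ} (hf : CC f) (hg : CC g) (hh : CC h) :
    ip f (fun x => g x - h x) = ip f g - ip f h := by
  simp only [ip, mul_sub]
  exact integral_sub (hf.integrable_mul hg) (hf.integrable_mul hh)

lemma ip_sum {ι : Type*} {f : ℝ → ℂ} (F : Finset ι) (a : ι → ℂ) {g : ι → ℝ → ℂ}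
    (hf : CC f) (hg : ∀ i, CC (g i)) :
    ip f (fun x => ∑ i ∈ F, a i * g i x) = ∑ i ∈ F, a i * ip f (g i) := by
  have := integral_conj_sum ({0} : Finset ℕ) F (fun _ => 1) a (fun _ => f) g (fun _ => hf) hg
  simpa [ip] using this

lemma ip_symm (f g : ℝ → ℂ) : ip g f = (starRingEnd ℂ) (ip f g) := by
  rw [ip, ip, ← integral_conj]
  congr 1; funext x
  simp [mul_comm]

lemma ip_bound {f g : ℝ → ℂ} (hf : CC f) (hg : CC g) {ε : ℝ} (hε : 0 < ε)
    (h : eLpNorm g 2 volume < ENNReal.ofReal ε) :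
    ‖ip f g‖ ≤ (eLpNorm f 2 volume).toReal * ε := by
  have mf : MemLp f 2 volume := hf.1.memLp_of_hasCompactSupport hf.2
  have mg : MemLp g 2 volume := hg.1.memLp_of_hasCompactSupport hg.2
  have e : ip f g = inner ℂ (mf.toLp f) (mg.toLp g) := by
    rw [L2.inner_def, ip]
    apply integral_congr_ae
    filter_upwards [mf.coeFn_toLp, mg.coeFn_toLp] with x h1 h2
    rw [h1, h2]
    simp [mul_comm]
  rw [e]
  refine (norm_inner_le_norm _ _).trans ?_
  rw [Lp.norm_toLp, Lp.norm_toLp]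
  apply mul_le_mul_of_nonneg_left _ ENNReal.toReal_nonneg
  exact ENNReal.toReal_le_of_le_ofReal hε.le h.le

lemma ts_of {φ ψ : ℝ → ℂ} (hφ : CC φ) (hψ : CC ψ)
    (hφON : ∀ m m' : ℤ,
      (∫ x : ℝ, (starRingEnd ℂ) (φ (x - m)) * φ (x - m')) = if m = m' then 1 else 0)
    (hspan : ∀ (J : ℕ) (ε : ℝ), 0 < ε →
      ∃ (F : Finset ℤ) (a : ℤ → ℂ),
        eLpNorm (fun x : ℝ =>
            ψ x - ∑ k ∈ F, a k * φ ((2 : ℝ) ^ (J + 1) * x - k)) 2 volume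
          < ENNReal.ofReal ε) : TS φ ψ := by
  intro n
  set N : ℝ := (2 : ℝ) ^ (n + 1) with hN
  have hN0 : 0 < N := by positivity
  set e : ℤ → ℝ → ℂ := fun k x => φ (N * x - k) with he
  have hec : ∀ k, CC (e k) := fun k => hφ.comp_affine hN0.ne' k
  have hee : ∀ k l, ip (e k) (e l) = if k = l then (N : ℂ)⁻¹ else 0 := by
    intro k l
    have := Measure.integral_comp_mul_left
      (fun x : ℝ => (starRingEnd ℂ) (φ (x - k)) * φ (x - l)) N
    simp only [ip, he]
    rw [this, hφON, abs_of_pos (by positivity)]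
    split_ifs <;> simp
  obtain ⟨M, hM0, hMφ, hMψ⟩ : ∃ M : ℝ, 0 ≤ M ∧ (∀ x, φ x ≠ 0 → |x| ≤ M) ∧
      (∀ x, ψ x ≠ 0 → |x| ≤ M) := by
    obtain ⟨M1, h1⟩ := hφ.2.isCompact.isBounded.exists_norm_le
    obtain ⟨M2, h2⟩ := hψ.2.isCompact.isBounded.exists_norm_le
    refine ⟨max 0 (max M1 M2), le_max_left _ _, ?_, ?_⟩
    · intro x hx
      exact (h1 x (subset_tsupport _ hx)).trans (by simp)
    · intro x hx
      exact (h2 x (subset_tsupport _ hx)).trans (by simp)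
  set B : ℤ := ⌈N * M + M⌉
  set K := Finset.Icc (-B) B
  have hK : ∀ k, k ∉ K → ip (e k) ψ = 0 := by
    intro k hk
    rw [ip]
    apply integral_eq_zero_of_ae
    refine Filter.Eventually.of_forall fun x => ?_
    simp only [Pi.zero_apply]
    by_contra hne
    have h1 : ψ x ≠ 0 := fun h => hne (by simp [h])
    have h2 : φ (N * x - k) ≠ 0 := fun h => hne (by simp [he, h])
    have h3 := abs_le.1 (hMψ _ h1)
    have h4 := abs_le.1 (hMφ _ h2)
    apply hk
    have h5 : N * M + M ≤ B := Int.le_ceil _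
    rw [Finset.mem_Icc]
    constructor
    · have : (-B : ℝ) ≤ k := by nlinarith
      exact_mod_cast this
    · have : (k : ℝ) ≤ B := by nlinarith
      exact_mod_cast this
  set a : ℤ → ℂ := fun k => N * ip (e k) ψ
  refine ⟨K, a, ?_⟩
  have hSc : ∀ (F : Finset ℤ) (a : ℤ → ℂ), CC (fun x => ∑ k ∈ F, a k * e k x) :=
    fun F a => CC.sum F fun k => (hec k).const_mul _
  set g : ℝ → ℂ := fun x => ψ x - ∑ k ∈ K, a k * e k x with hg
  have hgc : CC g := hψ.sub (hSc K a)
  have hNc : (N : ℂ) ≠ 0 := by exact_mod_cast hN0.ne'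
  have hge : ∀ k, ip (e k) g = 0 := by
    intro k
    rw [hg, ip_sub (hec k) hψ (hSc K a), ip_sum K a (hec k) hec]
    simp only [hee, mul_ite, mul_zero]
    rw [Finset.sum_ite_eq]
    split_ifs with h
    · simp only [a]; field_simp; ring
    · simp [hK k h]
  have hge' : ∀ k, ip g (e k) = 0 := fun k => by rw [ip_symm, hge, map_zero]
  have hS : ∀ (F : Finset ℤ) (a : ℤ → ℂ), ip g (fun x => ∑ k ∈ F, a k * e k x) = 0 := by
    intro F a
    rw [ip_sum F a hgc hec]; simp [hge']
  have hψg : ip g g = ip g ψ := by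
    conv_lhs => rw [hg]
    rw [← hg, ip_sub hgc hψ (hSc K a), hS, sub_zero]
  have hz : ‖ip g g‖ ≤ 0 := by
    apply le_of_forall_pos_le_add
    intro δ hδ
    set C := (eLpNorm g 2 volume).toReal
    have hC : 0 ≤ C := ENNReal.toReal_nonneg
    obtain ⟨F, a', hF⟩ := hspan n (δ / (C + 1)) (by positivity)
    have h1 := ip_bound hgc (hψ.sub (hSc F a')) (by positivity) hF
    rw [ip_sub hgc hψ (hSc F a'), hS, sub_zero, ← hψg] at h1
    refine h1.trans ?_
    rw [zero_add, mul_div_assoc', div_le_iff₀ (by positivity)]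
    nlinarith
  have hg0 : g = 0 := hgc.eq_zero (norm_le_zero_iff.1 hz)
  intro x
  have := congrFun hg0 x
  simp only [hg, Pi.zero_apply] at this
  exact sub_eq_zero.1 this

/-- The functions `f (2^k x - c m)`. -/
noncomputable def fam (f : ℝ → ℂ) (c : ℝ) (k : ℕ) (m : ℤ) : ℝ → ℂ :=
  fun x => f ((2 : ℝ) ^ k * x - c * m)

lemma fam_eq (f : ℝ → ℂ) (c : ℝ) (k : ℕ) (m : ℤ) :
    fam f c k m = act (AddMonoidAlgebra.single (c * m * (2 : ℝ) ^ (-(k : ℤ))) 1) (dil f k) := by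
  funext x
  rw [act_single]
  simp only [fam, dil, one_mul]
  congr 1
  have e : (2 : ℝ) ^ (k : ℤ) * (2 : ℝ) ^ (-(k : ℤ)) = 1 := by
    rw [← zpow_add₀ (by norm_num)]; simp
  rw [← zpow_natCast]
  linear_combination c * m * e

lemma fam_single_mem {c : ℝ} {b : ℕ} (hc : ∀ m : ℤ, ∃ n : ℤ, c * m = n / (b : ℝ)) (k : ℕ) (m : ℤ)
    (z : ℂ) : AddMonoidAlgebra.single (c * m * (2 : ℝ) ^ (-(k : ℤ))) z ∈ Sup (Hb b k) := by
  apply single_mem_Sup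
  obtain ⟨n, hn⟩ := hc m
  refine mem_Hb.2 ⟨n, ?_⟩
  rw [hn]; ring

/-- Span of the wavelets of scale below `N`. -/
noncomputable def W (ψ : ℝ → ℂ) (c : ℝ) (N : ℕ) : Submodule ℂ (ℝ → ℂ) :=
  Submodule.span ℂ {f | ∃ i < N, ∃ m : ℤ, f = fam ψ c i m}

/-- Span of all wavelets. -/
noncomputable def Winf (ψ : ℝ → ℂ) (c : ℝ) : Submodule ℂ (ℝ → ℂ) :=
  Submodule.span ℂ {f | ∃ (i : ℕ) (m : ℤ), f = fam ψ c i m}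

lemma W_mono {ψ : ℝ → ℂ} {c : ℝ} {M N : ℕ} (h : M ≤ N) : W ψ c M ≤ W ψ c N := by
  apply Submodule.span_mono
  rintro f ⟨i, hi, m, rfl⟩
  exact ⟨i, by omega, m, rfl⟩

lemma Winf_exists {ψ : ℝ → ℂ} {c : ℝ} {f : ℝ → ℂ} (hf : f ∈ Winf ψ c) : ∃ N, f ∈ W ψ c N := by
  induction hf using Submodule.span_induction with
  | mem f hf =>
    obtain ⟨i, m, rfl⟩ := hf
    exact ⟨i + 1, Submodule.subset_span ⟨i, by omega, m, rfl⟩⟩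
  | zero => exact ⟨0, Submodule.zero_mem _⟩
  | add f g _ _ hf hg =>
    obtain ⟨M, hM⟩ := hf
    obtain ⟨N, hN⟩ := hg
    exact ⟨max M N, Submodule.add_mem _ (W_mono (le_max_left _ _) hM)
      (W_mono (le_max_right _ _) hN)⟩
  | smul z f _ hf =>
    obtain ⟨M, hM⟩ := hf
    exact ⟨M, Submodule.smul_mem _ _ hM⟩

lemma W_succ {ψ : ℝ → ℂ} {c : ℝ} {b : ℕ} (hc : ∀ m : ℤ, ∃ n : ℤ, c * m = n / (b : ℝ))
    {N : ℕ} {f : ℝ → ℂ} (hf : f ∈ W ψ c (N + 1)) :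
    ∃ w ∈ W ψ c N, ∃ P ∈ Sup (Hb b N), f = act P (dil ψ N) + w := by
  induction hf using Submodule.span_induction with
  | mem f hf =>
    obtain ⟨i, hi, m, rfl⟩ := hf
    by_cases h : i < N
    · exact ⟨_, Submodule.subset_span ⟨i, h, m, rfl⟩, 0, Subalgebra.zero_mem _, by simp⟩
    · obtain rfl : i = N := by omega
      exact ⟨0, Submodule.zero_mem _, _, fam_single_mem hc i m 1, by rw [fam_eq]; simp⟩
  | zero => exact ⟨0, Submodule.zero_mem _, 0, Subalgebra.zero_mem _, by simp⟩
  | add f g _ _ hf hg =>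
    obtain ⟨w, hw, P, hP, rfl⟩ := hf
    obtain ⟨w', hw', P', hP', rfl⟩ := hg
    refine ⟨w + w', Submodule.add_mem _ hw hw', P + P', Subalgebra.add_mem _ hP hP', ?_⟩
    rw [map_add, LinearMap.add_apply]; abel
  | smul z f _ hf =>
    obtain ⟨w, hw, P, hP, rfl⟩ := hf
    refine ⟨z • w, Submodule.smul_mem _ _ hw, z • P, Subalgebra.smul_mem _ hP _, ?_⟩
    rw [map_smul, LinearMap.smul_apply, smul_add]

lemma W_sub {φ ψ : ℝ → ℂ} (hTS : TS φ ψ) {c : ℝ} {b : ℕ} (hb : 0 < b)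
    (hc : ∀ m : ℤ, ∃ n : ℤ, c * m = n / (b : ℝ))
    {N : ℕ} {f : ℝ → ℂ} (hf : f ∈ W ψ c N) :
    ∃ R ∈ Sup (Hb b N), f = act R (dil φ N) := by
  induction hf using Submodule.span_induction with
  | mem f hf =>
    obtain ⟨i, hi, m, rfl⟩ := hf
    obtain ⟨d, hd, hd'⟩ := hTS.act (show (i : ℤ) < N by exact_mod_cast hi)
    refine ⟨_, mul_mem (Sup_mono (Hb_mono_k ?_) (fam_single_mem hc i m 1))
      (Sup_mono (Hb_one_le hb _) hd), ?_⟩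
    · exact_mod_cast hi.le
    · rw [act_mul, ← hd', fam_eq]
  | zero => exact ⟨0, Subalgebra.zero_mem _, by simp⟩
  | add f g _ _ hf hg =>
    obtain ⟨P, hP, rfl⟩ := hf
    obtain ⟨P', hP', rfl⟩ := hg
    exact ⟨P + P', Subalgebra.add_mem _ hP hP', by rw [map_add, LinearMap.add_apply]⟩
  | smul z f _ hf =>
    obtain ⟨P, hP, rfl⟩ := hf
    exact ⟨z • P, Subalgebra.smul_mem _ hP _, by rw [map_smul, LinearMap.smul_apply]⟩

lemma descend {φ ψ : ℝ → ℂ} (hφ : CC φ) (hψ : CC ψ) (hφ0 : φ ≠ 0) (hψ0 : ψ ≠ 0)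
    (hTS : TS φ ψ) (h : ∀ l : ℤ, (∫ x : ℝ, (starRingEnd ℂ) (ψ (2 * x - l)) * ψ x) = 0)
    {b : ℕ} (hb : Odd b) {c c' : ℝ} (hc : ∀ m : ℤ, ∃ n : ℤ, c * m = n / (b : ℝ))
    (hc' : ∀ m : ℤ, ∃ n : ℤ, c' * m = n / (b : ℝ)) (k : ℕ) (T : Finset ℤ) (g : ℤ → ℂ)
    (hf : (∑ m ∈ T, g m • fam φ c' k m) ∈ Winf ψ c) :
    (∑ m ∈ T, g m • fam φ c' k m) ∈ W ψ c k := by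
  have hQ : ∃ Q ∈ Sup (Hb b k), (∑ m ∈ T, g m • fam φ c' k m) = act Q (dil φ k) := by
    refine ⟨∑ m ∈ T, g m • AddMonoidAlgebra.single (c' * m * (2 : ℝ) ^ (-(k : ℤ))) 1, ?_, ?_⟩
    · exact Subalgebra.sum_mem _ fun m _ => Subalgebra.smul_mem _ (fam_single_mem hc' k m 1) _
    · rw [map_sum, LinearMap.sum_apply]
      refine Finset.sum_congr rfl fun m _ => ?_
      rw [fam_eq, map_smul, LinearMap.smul_apply]
  obtain ⟨Q, hQ, hQe⟩ := hQ
  rw [hQe] at hf ⊢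
  obtain ⟨N, hN⟩ := Winf_exists hf
  induction N with
  | zero => exact W_mono (Nat.zero_le _) hN
  | succ N ih =>
    by_cases hNk : N + 1 ≤ k
    · exact W_mono hNk hN
    · apply ih
      obtain ⟨w, hw, P, hP, he⟩ := W_succ hc hN
      obtain ⟨R, hR, hRe⟩ := W_sub hTS hb.pos hc hw
      have hP0 : P = 0 := key hφ hψ hφ0 hψ0 hTS h hb
        (show (k : ℤ) ≤ N by omega) hP hR hQ (by rw [he, hRe])
      rw [he, hP0]
      simpa using hw

lemma fam_li {φ : ℝ → ℂ} (hφ : CC φ) (hφ0 : φ ≠ 0) {c : ℝ} (hc : c ≠ 0) (k : ℕ) (T : Finset ℤ)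
    (g : ℤ → ℂ) (h : (∑ m ∈ T, g m • fam φ c k m) = 0) : ∀ m ∈ T, g m = 0 := by
  classical
  set u : ℤ → ℝ := fun m => c * m * (2 : ℝ) ^ (-(k : ℤ)) with hu
  have hinj : ∀ m n, u m = u n → m = n := by
    intro m n hmn
    have h2 : (2 : ℝ) ^ (-(k : ℤ)) ≠ 0 := by positivity
    have := mul_left_cancel₀ hc (mul_right_cancel₀ h2 hmn)
    exact_mod_cast this
  have hQ : (∑ m ∈ T, AddMonoidAlgebra.single (u m) (g m) : A) = 0 := by
    apply act_inj (dil_ne hφ0 k) (hφ.dil k).bdd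
    rw [map_zero, LinearMap.zero_apply, ← h, map_sum, LinearMap.sum_apply]
    refine Finset.sum_congr rfl fun m _ => ?_
    rw [fam_eq, act_single, act_single]
    funext x
    simp [hu]
  intro m hm
  have := congrArg (fun p : A => p.coeff (u m)) hQ
  simp only [AddMonoidAlgebra.coeff_sum, Finsupp.finset_sum_apply, AddMonoidAlgebra.coeff_single,
    AddMonoidAlgebra.coeff_zero, Finsupp.coe_zero, Pi.zero_apply] at this
  rw [Finset.sum_eq_single m] at this
  · simpa using this
  · intro n _ hne
    rw [Finsupp.single_eq_of_ne]
    intro h'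
    exact hne (hinj _ _ h').symm
  · intro h'; exact absurd hm h'

/-- The bivariate relation. -/
def Rel (T : Finset ℤ) (N : ℕ) (f : ℤ → ℝ → ℂ) (p q : ℕ → ℤ → ℝ → ℂ)
    (α : ℤ → ℤ → ℂ) (β γ : ℕ → ℤ → ℤ → ℂ) : Prop :=
  ∀ x y : ℝ, (∑ m ∈ T, ∑ n ∈ T, α m n * (f m x * f n y)) +
    (∑ j ∈ Finset.range N, ∑ m ∈ T, ∑ n ∈ T, β j m n * (p j m x * q j n y)) +
    (∑ j ∈ Finset.range N, ∑ m ∈ T, ∑ n ∈ T, γ j m n * (q j m x * p j n y)) = 0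

lemma Rel.swap {T : Finset ℤ} {N : ℕ} {f : ℤ → ℝ → ℂ} {p q : ℕ → ℤ → ℝ → ℂ}
    {α : ℤ → ℤ → ℂ} {β γ : ℕ → ℤ → ℤ → ℂ} (h : Rel T N f p q α β γ) :
    Rel T N f p q (fun m n => α n m) (fun j m n => γ j n m) (fun j m n => β j n m) := by
  intro x y
  rw [← h y x, Finset.sum_comm, add_right_comm]
  congr 1
  · congr 1
    · refine Finset.sum_congr rfl fun m _ => Finset.sum_congr rfl fun n _ => ?_
      ring
    · refine Finset.sum_congr rfl fun j _ => ?_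
      rw [Finset.sum_comm]
      refine Finset.sum_congr rfl fun m _ => Finset.sum_congr rfl fun n _ => ?_
      ring
  · refine Finset.sum_congr rfl fun j _ => ?_
    rw [Finset.sum_comm]
    refine Finset.sum_congr rfl fun m _ => Finset.sum_congr rfl fun n _ => ?_
    ring

lemma Rel.lam {T : Finset ℤ} {N : ℕ} {f : ℤ → ℝ → ℂ} {p q : ℕ → ℤ → ℝ → ℂ}
    {α : ℤ → ℤ → ℂ} {β γ : ℕ → ℤ → ℤ → ℂ} (h : Rel T N f p q α β γ)
    (L : (ℝ → ℂ) →ₗ[ℂ] ℂ) (y : ℝ) :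
    (∑ n ∈ T, (∑ m ∈ T, α m n * L (f m)) * f n y) +
    (∑ j ∈ Finset.range N, ∑ m ∈ T, L (p j m) * ∑ n ∈ T, β j m n * q j n y) +
    (∑ j ∈ Finset.range N, ∑ n ∈ T, L (∑ m ∈ T, γ j m n • q j m) * p j n y) = 0 := by
  have h1 : (∑ m ∈ T, ∑ n ∈ T, (α m n * f n y) • f m) +
    (∑ j ∈ Finset.range N, ∑ m ∈ T, ∑ n ∈ T, (β j m n * q j n y) • p j m) +
    (∑ j ∈ Finset.range N, ∑ m ∈ T, ∑ n ∈ T, (γ j m n * p j n y) • q j m) = 0 := by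
    funext x
    rw [Pi.zero_apply, ← h x y]
    simp only [Pi.add_apply, Finset.sum_apply, Pi.smul_apply, smul_eq_mul]
    congr 1
    · congr 1
      · refine Finset.sum_congr rfl fun m _ => Finset.sum_congr rfl fun n _ => ?_
        ring
      · refine Finset.sum_congr rfl fun j _ => Finset.sum_congr rfl fun m _ =>
          Finset.sum_congr rfl fun n _ => ?_
        ring
    · refine Finset.sum_congr rfl fun j _ => Finset.sum_congr rfl fun m _ =>
        Finset.sum_congr rfl fun n _ => ?_
      ring
  have h2 := congrArg L h1
  rw [map_zero] at h2
  rw [← h2]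
  simp only [map_add, map_sum, map_smul, smul_eq_mul, Finset.sum_mul, Finset.mul_sum]
  congr 1
  · congr 1
    · rw [Finset.sum_comm]
      refine Finset.sum_congr rfl fun m _ => Finset.sum_congr rfl fun n _ => ?_
      ring
    · refine Finset.sum_congr rfl fun j _ => Finset.sum_congr rfl fun m _ =>
        Finset.sum_congr rfl fun n _ => ?_
      ring
  · refine Finset.sum_congr rfl fun j _ => ?_
    rw [Finset.sum_comm]
    refine Finset.sum_congr rfl fun m _ => Finset.sum_congr rfl fun n _ => ?_
    ring

lemma exists_functional {ι : Type*} {v : ι → ℝ → ℂ} (hv : LinearIndependent ℂ v) (c : ι → ℂ) :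
    ∃ L : (ℝ → ℂ) →ₗ[ℂ] ℂ, ∀ i, L (v i) = c i := by
  obtain ⟨L, hL⟩ := LinearMap.exists_extend ((Finsupp.linearCombination ℂ c) ∘ₗ hv.repr)
  refine ⟨L, fun i => ?_⟩
  have hm : v i ∈ Submodule.span ℂ (Set.range v) := Submodule.subset_span ⟨i, rfl⟩
  have := LinearMap.congr_fun hL ⟨v i, hm⟩
  simp only [LinearMap.coe_comp, Function.comp_apply, Submodule.subtype_apply] at this
  rw [this]
  have h2 : hv.repr ⟨v i, hm⟩ = Finsupp.single i 1 := hv.repr_eq_single i _ rfl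
  simp [h2]

/-- Finite form of one-dimensional independence. -/
def LI1 (f : ℤ → ℝ → ℂ) (p : ℕ → ℤ → ℝ → ℂ) : Prop :=
  ∀ (F : Finset ℤ) (G : Finset (ℕ × ℤ)) (α : ℤ → ℂ) (β : ℕ × ℤ → ℂ),
    (fun x : ℝ => ∑ m ∈ F, α m * f m x + ∑ r ∈ G, β r * p r.1 r.2 x) = 0 →
    (∀ m ∈ F, α m = 0) ∧ ∀ r ∈ G, β r = 0

lemma LI1.li {f : ℤ → ℝ → ℂ} {p : ℕ → ℤ → ℝ → ℂ} (h : LI1 f p) :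
    LinearIndependent ℂ (Sum.elim f (fun r : ℕ × ℤ => p r.1 r.2)) := by
  rw [linearIndependent_iff']
  intro s g hs i hi
  have := h s.toLeft s.toRight (fun m => g (Sum.inl m)) (fun r => g (Sum.inr r)) (by
    rw [← hs, Finset.sum_sum_eq_sum_toLeft_add_sum_toRight]
    funext x
    simp [Finset.sum_apply])
  rcases i with m | r
  · exact this.1 m (by simpa using hi)
  · exact this.2 r (by simpa using hi)

lemma stepA {T : Finset ℤ} {N : ℕ} {f : ℤ → ℝ → ℂ} {p q : ℕ → ℤ → ℝ → ℂ}
    {α : ℤ → ℤ → ℂ} {β γ : ℕ → ℤ → ℤ → ℂ} (h : Rel T N f p q α β γ) (hli : LI1 f p)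
    (L : (ℝ → ℂ) →ₗ[ℂ] ℂ) (hL : ∀ j m, L (p j m) = 0) :
    (∀ n ∈ T, (∑ m ∈ T, α m n * L (f m)) = 0) ∧
    (∀ j < N, ∀ n ∈ T, L (∑ m ∈ T, γ j m n • q j m) = 0) := by
  have := hli T (Finset.range N ×ˢ T) (fun n => ∑ m ∈ T, α m n * L (f m))
    (fun r => L (∑ m ∈ T, γ r.1 m r.2 • q r.1 m)) (by
      funext y
      have := h.lam L y
      simp only [hL, zero_mul, Finset.sum_const_zero, add_zero] at this
      rw [Finset.sum_product]
      exact this)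
  refine ⟨this.1, fun j hj n hn => this.2 (j, n) ?_⟩
  simp [hj, hn]

lemma stepAlpha {T : Finset ℤ} {N : ℕ} {f : ℤ → ℝ → ℂ} {p q : ℕ → ℤ → ℝ → ℂ}
    {α : ℤ → ℤ → ℂ} {β γ : ℕ → ℤ → ℤ → ℂ} (h : Rel T N f p q α β γ) (hli : LI1 f p) :
    ∀ m ∈ T, ∀ n ∈ T, α m n = 0 := by
  classical
  intro m hm n hn
  obtain ⟨L, hL⟩ := exists_functional hli.li (Sum.elim (fun m' => if m' = m then 1 else 0)
    (fun _ => 0))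
  have h1 : ∀ m', L (f m') = if m' = m then 1 else 0 := fun m' => hL (Sum.inl m')
  have := (stepA h hli L (fun j m => hL (Sum.inr (j, m)))).1 n hn
  simpa [h1, hm] using this

lemma stepD {T : Finset ℤ} {N : ℕ} {f : ℤ → ℝ → ℂ} {ψ : ℝ → ℂ} {c : ℝ} {q : ℕ → ℤ → ℝ → ℂ}
    {α : ℤ → ℤ → ℂ} {β γ : ℕ → ℤ → ℤ → ℂ} (h : Rel T N f (fam ψ c) q α β γ)
    (hli : LI1 f (fam ψ c)) : ∀ j < N, ∀ n ∈ T, (∑ m ∈ T, γ j m n • q j m) ∈ Winf ψ c := by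
  intro j hj n hn
  by_contra hcon
  obtain ⟨L, hL, hk⟩ := Submodule.exists_le_ker_of_notMem hcon
  apply hL
  refine (stepA h hli L ?_).2 j hj n hn
  intro i m
  exact hk (Submodule.subset_span ⟨i, m, rfl⟩)

lemma half {T : Finset ℤ} {N : ℕ} {f : ℤ → ℝ → ℂ} {ψ : ℝ → ℂ} {c : ℝ} {q : ℕ → ℤ → ℝ → ℂ}
    {α : ℤ → ℤ → ℂ} {β γ : ℕ → ℤ → ℤ → ℂ} (h : Rel T N f (fam ψ c) q α β γ)
    (hli : LI1 f (fam ψ c))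
    (hdesc : ∀ (j : ℕ) (g : ℤ → ℂ), (∑ m ∈ T, g m • q j m) ∈ Winf ψ c →
      (∑ m ∈ T, g m • q j m) ∈ W ψ c j)
    (hq : ∀ (j : ℕ) (g : ℤ → ℂ), (∑ m ∈ T, g m • q j m) = 0 → ∀ m ∈ T, g m = 0)
    {j0 : ℕ} (hj0 : j0 < N)
    (hγ : ∀ j, j0 < j → j < N → ∀ m ∈ T, ∀ n ∈ T, γ j m n = 0) :
    ∀ m ∈ T, ∀ n ∈ T, β j0 m n = 0 := by
  classical
  intro m0 hm0
  obtain ⟨L, hL⟩ := exists_functional hli.li (Sum.elim (fun _ => 0)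
    (fun r => if r = (j0, m0) then 1 else 0))
  have h1 : ∀ m', L (f m') = 0 := fun m' => hL (Sum.inl m')
  have h2 : ∀ j m, L (fam ψ c j m) = if (j, m) = (j0, m0) then 1 else 0 :=
    fun j m => hL (Sum.inr (j, m))
  have h3 : ∀ j < N, ∀ n ∈ T, L (∑ m ∈ T, γ j m n • q j m) = 0 := by
    intro j hj n hn
    by_cases hjj : j0 < j
    · have : (∑ m ∈ T, γ j m n • q j m) = 0 := by
        refine Finset.sum_eq_zero fun m hm => ?_
        rw [hγ j hjj hj m hm n hn, zero_smul]
      rw [this, map_zero]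
    · have hmem := hdesc j (fun m => γ j m n) (stepD h hli j hj n hn)
      have hle : W ψ c j ≤ LinearMap.ker L := by
        apply Submodule.span_le.2
        rintro g ⟨i, hi, m, rfl⟩
        simp only [SetLike.mem_coe, LinearMap.mem_ker]
        rw [h2, if_neg]
        rintro heq
        have := (Prod.mk.inj heq).1
        omega
      exact hle hmem
  apply hq j0
  funext y
  have := h.lam L y
  have e3 : (∑ j ∈ Finset.range N, ∑ n ∈ T,
      L (∑ m ∈ T, γ j m n • q j m) * fam ψ c j n y) = 0 := by
    refine Finset.sum_eq_zero fun j hj => Finset.sum_eq_zero fun n hn => ?_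
    rw [h3 j (Finset.mem_range.1 hj) n hn, zero_mul]
  rw [e3] at this
  simp only [h1, h2, mul_zero, Finset.sum_const_zero, zero_mul, zero_add, add_zero] at this
  rw [Finset.sum_eq_single j0, Finset.sum_eq_single m0] at this
  · simpa [Finset.sum_apply] using this
  · intro m _ hne
    simp [hne]
  · intro h; exact absurd hm0 h
  · intro j _ hne
    simp [hne]
  · intro h; exact absurd (Finset.mem_range.2 hj0) h

lemma full {T : Finset ℤ} {N : ℕ} {f : ℤ → ℝ → ℂ} {ψ : ℝ → ℂ} {c : ℝ} {q : ℕ → ℤ → ℝ → ℂ}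
    {α : ℤ → ℤ → ℂ} {β γ : ℕ → ℤ → ℤ → ℂ} (h : Rel T N f (fam ψ c) q α β γ)
    (hli : LI1 f (fam ψ c))
    (hdesc : ∀ (j : ℕ) (g : ℤ → ℂ), (∑ m ∈ T, g m • q j m) ∈ Winf ψ c →
      (∑ m ∈ T, g m • q j m) ∈ W ψ c j)
    (hq : ∀ (j : ℕ) (g : ℤ → ℂ), (∑ m ∈ T, g m • q j m) = 0 → ∀ m ∈ T, g m = 0) :
    ∀ d j, j < N → N ≤ j + d → (∀ m ∈ T, ∀ n ∈ T, β j m n = 0) ∧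
      (∀ m ∈ T, ∀ n ∈ T, γ j m n = 0) := by
  intro d
  induction d with
  | zero => intro j h1 h2; omega
  | succ d ih =>
    intro j h1 h2
    constructor
    · exact half h hli hdesc hq h1 fun j' hj' hN => (ih j' hN (by omega)).2
    · intro m hm n hn
      exact half h.swap hli hdesc hq h1
        (fun j' hj' hN m hm n hn => (ih j' hN (by omega)).1 n hn m hm) n hn m hm

lemma box2 {T : Finset ℤ} {F : Finset (ℤ × ℤ)} (hF : F ⊆ T ×ˢ T) (c : ℤ → ℤ → ℂ)
    (g : ℤ × ℤ → ℂ) (hin : ∀ p ∈ F, c p.1 p.2 = g p) (hout : ∀ p, p ∉ F → c p.1 p.2 = 0) :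
    ∑ m ∈ T, ∑ n ∈ T, c m n = ∑ p ∈ F, g p := by
  rw [← Finset.sum_product', ← Finset.sum_subset hF]
  · exact Finset.sum_congr rfl hin
  · intro p _ hp
    exact hout p hp

lemma box3 {N : ℕ} {T : Finset ℤ} {F : Finset (ℕ × ℤ × ℤ)}
    (hF : F ⊆ Finset.range N ×ˢ T ×ˢ T) (c : ℕ → ℤ → ℤ → ℂ)
    (g : ℕ × ℤ × ℤ → ℂ) (hin : ∀ p ∈ F, c p.1 p.2.1 p.2.2 = g p)
    (hout : ∀ p, p ∉ F → c p.1 p.2.1 p.2.2 = 0) :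
    ∑ j ∈ Finset.range N, ∑ m ∈ T, ∑ n ∈ T, c j m n = ∑ p ∈ F, g p := by
  have e : ∑ j ∈ Finset.range N, ∑ m ∈ T, ∑ n ∈ T, c j m n =
      ∑ p ∈ Finset.range N ×ˢ T ×ˢ T, c p.1 p.2.1 p.2.2 := by
    rw [Finset.sum_product]
    refine Finset.sum_congr rfl fun j _ => ?_
    rw [Finset.sum_product]
  rw [e, ← Finset.sum_subset hF]
  · exact Finset.sum_congr rfl hin
  · intro p _ hp
    exact hout p hp

end Gam

/-- Under the admissibility hypotheses, the "unsheared" family `Γ₃`,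
consisting of `φ¹(x₁ - c₁m₁)φ¹(x₂ - c₁m₂)`, of
`ψ_{j,0,m}(x₁,x₂) = 2^(3j/4) ψ¹(2^j x₁ - c₁m₁) φ¹(2^⌊j/2⌋ x₂ - c₂m₂)` and of
`ψ̃_{j,0,m}(x₁,x₂) = 2^(3j/4) φ¹(2^⌊j/2⌋ x₁ - c₂m₁) ψ¹(2^j x₂ - c₁m₂)`,
is linearly independent in `L²(ℝ²)`. -/
theorem stmt4
    -- admissibility hypotheses on φ¹ (= φ) and ψ¹ (= ψ)
    (s : ℝ) (hs : 0 < s) (φ ψ : ℝ → ℂ)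
    (hφc : Continuous φ) (hφsupp : tsupport φ = Set.Icc 0 s)
    (hφON : ∀ m m' : ℤ,
      (∫ x : ℝ, (starRingEnd ℂ) (φ (x - m)) * φ (x - m')) = if m = m' then 1 else 0)
    (hψc : Continuous ψ) (hψcs : HasCompactSupport ψ)
    (hψorth : ∀ (j j' : ℕ) (l l' : ℤ), (j, l) ≠ (j', l') →
      (∫ x : ℝ, (starRingEnd ℂ) (ψ ((2 : ℝ) ^ j * x - l)) * ψ ((2 : ℝ) ^ j' * x - l')) = 0)
    (hψne : ∀ (j : ℕ) (l : ℤ), (fun x : ℝ => ψ ((2 : ℝ) ^ j * x - l)) ≠ 0)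
    (hψspan : ∀ (J j : ℕ), j ≤ J → ∀ l : ℤ, ∀ ε : ℝ, 0 < ε →
      ∃ (F : Finset ℤ) (a : ℤ → ℂ),
        eLpNorm (fun x : ℝ =>
            ψ ((2 : ℝ) ^ j * x - l) - ∑ k ∈ F, a k * φ ((2 : ℝ) ^ (J + 1) * x - k)) 2 volume
          < ENNReal.ofReal ε)
    -- sampling constants
    (a₁ b₁ a₂ b₂ : ℕ) (ha₁ : 0 < a₁) (ha₂ : 0 < a₂) (hb₁ : 0 < b₁) (hb₂ : 0 < b₂)
    (hb₁odd : Odd b₁) (hb₂odd : Odd b₂)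
    (c₁ c₂ : ℝ) (hc₁ : c₁ = (a₁ : ℝ) / b₁) (hc₂ : c₂ = (a₂ : ℝ) / b₂)
    -- linear independence of the sampled 1D wavelet system
    (h1d : ∀ c : ℝ, (c = c₁ ∨ c = c₂) →
      ∀ (F : Finset ℤ) (G : Finset (ℕ × ℤ)) (α : ℤ → ℂ) (β : ℕ × ℤ → ℂ),
        (fun x : ℝ => ∑ m ∈ F, α m * φ (x - c * m) +
            ∑ p ∈ G, β p * ψ ((2 : ℝ) ^ p.1 * x - c * p.2)) = 0 →
        (∀ m ∈ F, α m = 0) ∧ ∀ p ∈ G, β p = 0) :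
    -- conclusion: linear independence of Γ₃ in L²(ℝ²)
    ∀ (F₀ : Finset (ℤ × ℤ)) (F₁ F₂ : Finset (ℕ × ℤ × ℤ))
      (α : ℤ × ℤ → ℂ) (β γ : ℕ × ℤ × ℤ → ℂ),
      (fun x : ℝ × ℝ =>
          (∑ m ∈ F₀, α m * (φ (x.1 - c₁ * m.1) * φ (x.2 - c₁ * m.2))) +
          (∑ p ∈ F₁, β p * ((((2 : ℝ) ^ ((3 * (p.1 : ℝ)) / 4) : ℝ) : ℂ) *
            ψ ((2 : ℝ) ^ p.1 * x.1 - c₁ * p.2.1) *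
            φ ((2 : ℝ) ^ (p.1 / 2) * x.2 - c₂ * p.2.2))) +
          (∑ p ∈ F₂, γ p * ((((2 : ℝ) ^ ((3 * (p.1 : ℝ)) / 4) : ℝ) : ℂ) *
            φ ((2 : ℝ) ^ (p.1 / 2) * x.1 - c₂ * p.2.1) *
            ψ ((2 : ℝ) ^ p.1 * x.2 - c₁ * p.2.2))))
        =ᵐ[volume] 0 →
      (∀ m ∈ F₀, α m = 0) ∧ (∀ p ∈ F₁, β p = 0) ∧ (∀ p ∈ F₂, γ p = 0) := by
  classical
  have hφC : Gam.CC φ := ⟨hφc, by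
    rw [HasCompactSupport, hφsupp]; exact isCompact_Icc⟩
  have hψC : Gam.CC ψ := ⟨hψc, hψcs⟩
  have hφ0 : φ ≠ 0 := by
    rintro rfl
    have := hφON 0 0
    simp at this
  have hψ0 : ψ ≠ 0 := by
    rintro rfl
    exact hψne 0 0 rfl
  have hTS : Gam.TS φ ψ := by
    refine Gam.ts_of hφC hψC hφON fun J ε hε => ?_
    have := hψspan J 0 (Nat.zero_le _) 0 ε hε
    simpa using this
  have horth : ∀ l : ℤ, (∫ x : ℝ, (starRingEnd ℂ) (ψ (2 * x - l)) * ψ x) = 0 := by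
    intro l
    have := hψorth 1 0 l 0 (by simp)
    simpa using this
  have hb : Odd (b₁ * b₂) := hb₁odd.mul hb₂odd
  have hb₁' : (b₁ : ℝ) ≠ 0 := by positivity
  have hb₂' : (b₂ : ℝ) ≠ 0 := by positivity
  have hcc₁ : ∀ m : ℤ, ∃ n : ℤ, c₁ * m = n / ((b₁ * b₂ : ℕ) : ℝ) := by
    intro m
    refine ⟨a₁ * b₂ * m, ?_⟩
    rw [hc₁]; push_cast; field_simp
  have hcc₂ : ∀ m : ℤ, ∃ n : ℤ, c₂ * m = n / ((b₁ * b₂ : ℕ) : ℝ) := by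
    intro m
    refine ⟨a₂ * b₁ * m, ?_⟩
    rw [hc₂]; push_cast; field_simp
  have hc₂0 : c₂ ≠ 0 := by rw [hc₂]; positivity
  have hli : Gam.LI1 (fun m x => φ (x - c₁ * m)) (Gam.fam ψ c₁) := h1d c₁ (Or.inl rfl)
  intro F₀ F₁ F₂ α β γ hae
  set w : ℕ → ℂ := fun j => (((2 : ℝ) ^ ((3 * (j : ℝ)) / 4) : ℝ) : ℂ) with hw
  have hw0 : ∀ j, w j ≠ 0 := by
    intro j
    have : (2 : ℝ) ^ ((3 * (j : ℝ)) / 4) ≠ 0 := by positivity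
    simp only [hw]
    exact Complex.ofReal_ne_zero.2 this
  -- the relation holds everywhere
  have hev := (Continuous.ae_eq_iff_eq (volume : Measure (ℝ × ℝ)) (by fun_prop)
    continuous_zero).1 hae
  -- boxes
  set T : Finset ℤ := F₀.image (fun m => m.1) ∪ F₀.image (fun m => m.2) ∪
    (F₁.image (fun p => p.2.1) ∪ F₁.image (fun p => p.2.2)) ∪
    (F₂.image (fun p => p.2.1) ∪ F₂.image (fun p => p.2.2)) with hT
  set N : ℕ := (F₁ ∪ F₂).sup (fun p => p.1) + 1 with hN
  have hF₀ : F₀ ⊆ T ×ˢ T := by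
    intro m hm
    simp only [hT, Finset.mem_product, Finset.mem_union, Finset.mem_image]
    exact ⟨Or.inl (Or.inl (Or.inl ⟨m, hm, rfl⟩)), Or.inl (Or.inl (Or.inr ⟨m, hm, rfl⟩))⟩
  have hF₁ : F₁ ⊆ Finset.range N ×ˢ T ×ˢ T := by
    intro p hp
    have h1 : p.1 ≤ (F₁ ∪ F₂).sup (fun p => p.1) :=
      Finset.le_sup (f := fun p : ℕ × ℤ × ℤ => p.1) (Finset.mem_union_left _ hp)
    simp only [hT, Finset.mem_product, Finset.mem_union, Finset.mem_image, Finset.mem_range]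
    exact ⟨by omega, Or.inl (Or.inr (Or.inl ⟨p, hp, rfl⟩)), Or.inl (Or.inr (Or.inr ⟨p, hp, rfl⟩))⟩
  have hF₂ : F₂ ⊆ Finset.range N ×ˢ T ×ˢ T := by
    intro p hp
    have h1 : p.1 ≤ (F₁ ∪ F₂).sup (fun p => p.1) :=
      Finset.le_sup (f := fun p : ℕ × ℤ × ℤ => p.1) (Finset.mem_union_right _ hp)
    simp only [hT, Finset.mem_product, Finset.mem_union, Finset.mem_image, Finset.mem_range]
    exact ⟨by omega, Or.inr (Or.inl ⟨p, hp, rfl⟩), Or.inr (Or.inr ⟨p, hp, rfl⟩)⟩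
  have hrel : Gam.Rel T N (fun m x => φ (x - c₁ * m)) (Gam.fam ψ c₁)
      (fun j => Gam.fam φ c₂ (j / 2))
      (fun m n => if (m, n) ∈ F₀ then α (m, n) else 0)
      (fun j m n => if (j, m, n) ∈ F₁ then β (j, m, n) * w j else 0)
      (fun j m n => if (j, m, n) ∈ F₂ then γ (j, m, n) * w j else 0) := by
    intro x y
    have h0 := congrFun hev (x, y)
    simp only [Pi.zero_apply] at h0
    refine Eq.trans ?_ h0
    congr 1
    · congr 1
      · refine Gam.box2 hF₀ _ _ (fun p hp => ?_) (fun p hp => ?_)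
        · simp only [Prod.mk.eta, hp, if_true]
        · simp only [Prod.mk.eta, hp, if_false, zero_mul]
      · refine Gam.box3 hF₁ _ _ (fun p hp => ?_) (fun p hp => ?_)
        · simp only [Prod.mk.eta, hp, if_true, Gam.fam, hw]
          ring
        · simp only [Prod.mk.eta, hp, if_false, zero_mul]
    · refine Gam.box3 hF₂ _ _ (fun p hp => ?_) (fun p hp => ?_)
      · simp only [Prod.mk.eta, hp, if_true, Gam.fam, hw]
        ring
      · simp only [Prod.mk.eta, hp, if_false, zero_mul]
  have hfull := Gam.full hrel hli
    (fun j g hg => Gam.W_mono (Nat.div_le_self j 2)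
      (Gam.descend hφC hψC hφ0 hψ0 hTS horth hb hcc₁ hcc₂ (j / 2) T g hg))
    (fun j g hg => Gam.fam_li hφC hφ0 hc₂0 (j / 2) T g hg) N
  refine ⟨?_, ?_, ?_⟩
  · intro m hm
    have h1 := Finset.mem_product.1 (hF₀ hm)
    have h2 := Gam.stepAlpha hrel hli m.1 h1.1 m.2 h1.2
    simpa [hm] using h2
  · intro p hp
    have h1 := Finset.mem_product.1 (hF₁ hp)
    have h3 := Finset.mem_product.1 h1.2
    have h2 := (hfull p.1 (Finset.mem_range.1 h1.1) (by omega)).1 p.2.1 h3.1 p.2.2 h3.2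
    simpa [hp, hw0] using h2
  · intro p hp
    have h1 := Finset.mem_product.1 (hF₂ hp)
    have h3 := Finset.mem_product.1 h1.2
    have h2 := (hfull p.1 (Finset.mem_range.1 h1.1) (by omega)).2 p.2.1 h3.1 p.2.2 h3.2
    simpa [hp, hw0] using h2
end
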